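/- Let F be a finite field with q elements and let k_1 ≥ k_2 ≥ ⋯ ≥ k_n ≥ 1 be integers. Then #P_{n;k_1,k_2,…,k_n} = q^{n-1} · #P_{n;k_1−1,k_2,…,k_n}. -/

import Mathlib

open Polynomial Matrix

/-- `P_{n;k₁,…,kₙ}`: the set of `A ∈ GL_n(F[x])` with `deg a_{i,j} ≤ k_j` for all `i, j` and
constant-term matrix equal to the identity. -/
def Pset (F : Type*) [Field F] (n : ℕ) (k : Fin n → ℕ) : Set (GL (Fin n) F[X]) :=
  {A | (∀ i j, ((A : Matrix (Fin n) (Fin n) F[X]) i j).degree ≤ (k j : ℕ)) ∧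
       (A : Matrix (Fin n) (Fin n) F[X]).map (fun p => p.coeff 0) = 1}

/-! Fix all columns of an invertible matrix `A` except the `i`-th, with degrees at most `d`, where
`d ≥ 1`. The columns of degree at most `d` completing them to an invertible matrix are `q ^ (n - 1)`
times as numerous as those of degree at most `d - 1`. Indeed, column reduction among the fixed
columns changes neither set, so their leading coefficient vectors may be assumed independent. The
leading coefficient vector of a completion lies in their span, as otherwise the determinant would
have positive degree; hence every completion of degree at most `d` is uniquely one of degree at most
`d - 1` plus a combination `∑ⱼ cⱼ x^(d - kⱼ) Aⱼ` of the fixed columns with `cⱼ ∈ F`. Summing over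
the fixed columns gives the recursion without the normalisation `A(0) = I`, which is restored by
dividing by the order of `GL_n(F)`, acting on the left. -/

section Counting

lemma ncard_eq_mul_ncard_of_fiberwise {α β : Type*} {s t : Set α} (hs : s.Finite) (hts : t ⊆ s)
    (f : α → β) (m : ℕ)
    (hfib : ∀ a ∈ s, {x ∈ s | f x = f a}.ncard = m * {x ∈ t | f x = f a}.ncard) :
    s.ncard = m * t.ncard := by
  classical
  lift s to Finset α using hs
  lift t to Finset α using s.finite_toSet.subset hts
  have hmaps : Set.MapsTo f (t : Set α) (s.image f : Finset β) := fun a ha ↦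
    Finset.mem_coe.2 (Finset.mem_image_of_mem f (hts ha))
  rw [Set.ncard_coe_finset, Set.ncard_coe_finset, Finset.card_eq_sum_card_image f s,
    Finset.card_eq_sum_card_fiberwise hmaps, Finset.mul_sum]
  refine Finset.sum_congr rfl fun b hb ↦ ?_
  obtain ⟨a, ha, rfl⟩ := Finset.mem_image.1 hb
  simpa only [← Set.ncard_coe_finset, Finset.coe_filter, Finset.mem_coe] using hfib a ha

lemma ncard_eq_natCard_mul_ncard_of_leftInverse {G H : Type*} [Monoid G] [Group H] {π : G →* H}
    {σ : H →* G} (hσ : Function.LeftInverse π σ) {s : Set G} (hs : ∀ h, ∀ g ∈ s, σ h * g ∈ s) :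
    s.ncard = Nat.card H * {g ∈ s | π g = 1}.ncard := by
  let e : H × {g ∈ s | π g = 1} ≃ s :=
    { toFun p := ⟨σ p.1 * p.2, hs _ _ p.2.2.1⟩
      invFun g := ⟨π g, σ (π g)⁻¹ * g, hs _ _ g.2, by rw [map_mul, hσ, inv_mul_cancel]⟩
      left_inv := by
        rintro ⟨h, g, -, hg⟩
        have hπ : π (σ h * g) = h := by rw [map_mul, hσ, hg, mul_one]
        simp [hπ, ← mul_assoc, ← map_mul]
      right_inv g := by simp [← mul_assoc, ← map_mul] }
  rw [← Nat.card_coe_set_eq, ← Nat.card_congr e, Nat.card_prod, Nat.card_coe_set_eq]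

lemma ncard_setOf_apply_eq_zero {ι M : Type*} [Fintype ι] [Zero M] (i : ι) :
    {c : ι → M | c i = 0}.ncard = Nat.card M ^ (Fintype.card ι - 1) := by
  classical
  let e : {c : ι → M // c i = 0} ≃ ({j // j ≠ i} → M) :=
    (Equiv.subtypeEquivRight fun c ↦ by simp [funext_iff]).trans
      (Equiv.subtypePreimage (· = i) fun _ ↦ 0)
  rw [← Nat.card_coe_set_eq, Set.coe_ofPred, Nat.card_congr e, Nat.card_fun,
    Nat.card_eq_fintype_card (α := {j // j ≠ i}), Fintype.card_subtype_compl,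
    Fintype.card_subtype_eq]

end Counting

section ReplaceColumn

variable {m ι R K : Type*} [DecidableEq ι] [Fintype ι]

lemma updateCol_mulVec_of_apply_eq_zero [NonUnitalNonAssocSemiring R] (A : Matrix m ι R) {i : ι}
    (b : m → R) {c : ι → R} (hc : c i = 0) : A.updateCol i b *ᵥ c = A *ᵥ c := by
  ext r
  simp only [mulVec, dotProduct]
  refine Finset.sum_congr rfl fun j _ ↦ ?_
  obtain rfl | hj := eq_or_ne j i
  · rw [hc, mul_zero, mul_zero]
  · rw [updateCol_ne hj]

lemma det_updateCol_mulVec [CommRing R] (A : Matrix ι ι R) (j : ι) (c : ι → R) :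
    (A.updateCol j (A *ᵥ c)).det = c j * A.det := by
  rw [← smul_eq_mul, ← det_updateCol_sum]
  congr 2
  ext r
  exact Finset.sum_congr rfl fun l _ ↦ mul_comm _ _

lemma det_updateCol_add_mulVec [CommRing R] (A : Matrix ι ι R) {i : ι} (v : ι → R) {c : ι → R}
    (hc : c i = 0) : (A.updateCol i (v + A *ᵥ c)).det = (A.updateCol i v).det := by
  rw [det_updateCol_add, det_updateCol_mulVec, hc, zero_mul, add_zero]

lemma det_updateCol_mulVec_updateCol [CommRing R] (A : Matrix ι ι R) {i j : ι} (hij : i ≠ j)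
    (v : ι → R) {c : ι → R} (hc : c i = 0) :
    ((A.updateCol j (A *ᵥ c)).updateCol i v).det = c j * (A.updateCol i v).det := by
  rw [updateCol_comm _ hij.symm, ← updateCol_mulVec_of_apply_eq_zero A v hc, det_updateCol_mulVec]

lemma exists_mulVec_eq_of_det_updateCol_eq_zero [Field K] {L : Matrix ι ι K} {i : ι}
    (hL : ∀ c, c i = 0 → L *ᵥ c = 0 → c = 0) {b : ι → K} (hb : (L.updateCol i b).det = 0) :
    ∃ c, c i = 0 ∧ L *ᵥ c = b := by
  obtain ⟨c, hc, hLc⟩ := exists_mulVec_eq_zero_iff.2 hb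
  have hci : c i ≠ 0 := fun h ↦
    hc (hL c h (by rwa [updateCol_mulVec_of_apply_eq_zero L b h] at hLc))
  let c' : ι → K := Pi.single i 1 - (c i)⁻¹ • c
  have hc' : c' i = 0 := by simp [c', hci]
  refine ⟨c', hc', ?_⟩
  rw [← updateCol_mulVec_of_apply_eq_zero L b hc', mulVec_sub, mulVec_smul, hLc, smul_zero,
    sub_zero, mulVec_single_one]
  ext r
  exact updateCol_self

end ReplaceColumn

section LeadingCoefficients

variable {m ι R : Type*}

/-- The matrix of leading coefficients of a polynomial matrix with respect to the column degree
bounds `k`: its `j`-th column consists of the coefficients of degree exactly `k j`, so it vanishes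
where the bound is not attained. -/
def leadingMatrix [Semiring R] (k : ι → ℕ) (A : Matrix m ι R[X]) : Matrix m ι R :=
  Matrix.of fun r j ↦ (A r j).coeff (k j)

lemma leadingMatrix_updateCol [Semiring R] [DecidableEq ι] (k : ι → ℕ) (A : Matrix m ι R[X])
    (i : ι) (d : ℕ) (v : m → R[X]) :
    leadingMatrix (Function.update k i d) (A.updateCol i v) =
      (leadingMatrix k A).updateCol i fun r ↦ (v r).coeff d := by
  ext r j
  obtain rfl | hj := eq_or_ne j i <;> simp [leadingMatrix, *]

lemma coeff_prod_sum_of_natDegree_le [CommSemiring R] (s : Finset ι) (f : ι → R[X]) (k : ι → ℕ)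
    (h : ∀ j ∈ s, (f j).natDegree ≤ k j) :
    (∏ j ∈ s, f j).coeff (∑ j ∈ s, k j) = ∏ j ∈ s, (f j).coeff (k j) := by
  classical
  induction s using Finset.induction_on with
  | empty => simp
  | insert a s ha ih =>
    have hs : ∀ j ∈ s, (f j).natDegree ≤ k j := fun j hj ↦ h j (Finset.mem_insert_of_mem hj)
    rw [Finset.prod_insert ha, Finset.sum_insert ha, Finset.prod_insert ha,
      coeff_mul_add_eq_of_natDegree_le (h a (Finset.mem_insert_self a s))
        ((natDegree_prod_le _ _).trans (Finset.sum_le_sum hs)), ih hs]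

variable [Fintype ι]

lemma coeff_det_sum_of_natDegree_le [CommRing R] [DecidableEq ι] {k : ι → ℕ}
    {A : Matrix ι ι R[X]} (hA : ∀ r j, (A r j).natDegree ≤ k j) :
    A.det.coeff (∑ j, k j) = (leadingMatrix k A).det := by
  rw [det_apply', det_apply', finsetSum_coeff]
  refine Finset.sum_congr rfl fun τ _ ↦ ?_
  rw [← C_eq_intCast, coeff_C_mul, coeff_prod_sum_of_natDegree_le _ _ _ fun j _ ↦ hA _ j]
  rfl

lemma det_leadingMatrix_eq_zero_of_isUnit_det [CommRing R] [IsDomain R] [DecidableEq ι]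
    {k : ι → ℕ} {A : Matrix ι ι R[X]} (hA : ∀ r j, (A r j).natDegree ≤ k j)
    (hdet : IsUnit A.det) {i : ι} (hi : 0 < k i) : (leadingMatrix k A).det = 0 := by
  rw [← coeff_det_sum_of_natDegree_le hA]
  refine coeff_eq_zero_of_natDegree_lt ?_
  rw [natDegree_eq_zero_of_isUnit hdet]
  exact hi.trans_le (Finset.single_le_sum_of_canonicallyOrdered (Finset.mem_univ i))

variable [Semiring R]

/-- The combination `∑ⱼ cⱼ x^(D - kⱼ) Aⱼ` of the columns `Aⱼ` of `A`, where the powers of `x` shift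
all columns of degree at most `kⱼ` to the common degree bound `D`. Natural subtraction truncates, so
this is meaningful only if `kⱼ ≤ D` whenever `cⱼ ≠ 0`. -/
noncomputable def shiftedComb (k : ι → ℕ) (A : Matrix m ι R[X]) (D : ℕ) (c : ι → R) : m → R[X] :=
  A *ᵥ fun j ↦ monomial (D - k j) (c j)

variable {k : ι → ℕ} {A : Matrix m ι R[X]} {D : ℕ} {c : ι → R}

lemma natDegree_shiftedComb_le (hA : ∀ r j, (A r j).natDegree ≤ k j)
    (hc : ∀ j, c j ≠ 0 → k j ≤ D) (r : m) : (shiftedComb k A D c r).natDegree ≤ D := by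
  refine natDegree_sum_le_of_forall_le _ _ fun j _ ↦ ?_
  obtain hj | hj := eq_or_ne (c j) 0
  · simp [hj]
  · exact (natDegree_mul_le_of_le (hA r j) (natDegree_monomial_le _)).trans_eq
      (Nat.add_sub_of_le (hc j hj))

lemma coeff_shiftedComb (hc : ∀ j, c j ≠ 0 → k j ≤ D) (r : m) :
    (shiftedComb k A D c r).coeff D = (leadingMatrix k A *ᵥ c) r := by
  rw [shiftedComb, mulVec, dotProduct, finsetSum_coeff]
  refine Finset.sum_congr rfl fun j _ ↦ ?_
  obtain hj | hj := eq_or_ne (c j) 0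
  · simp [hj]
  · have h := coeff_mul_monomial (A r j) (D - k j) (k j) (c j)
    rwa [Nat.add_sub_of_le (hc j hj)] at h

end LeadingCoefficients

section Completions

variable {ι R F : Type*} [Fintype ι] [DecidableEq ι] [CommRing R] [Field F]

/-- The columns of degree at most `d` which, put in place of the `i`-th column of `A`, yield an
invertible matrix. The `i`-th column of `A` itself is irrelevant. -/
def completions (A : Matrix ι ι R[X]) (i : ι) (d : ℕ) : Set (ι → R[X]) :=
  {v | (∀ r, (v r).natDegree ≤ d) ∧ IsUnit (A.updateCol i v).det}

variable {i : ι} {k : ι → ℕ} {d : ℕ}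

section CommRing

variable {A : Matrix ι ι R[X]}

lemma mem_completions_pred_iff (hd : 0 < d) {v : ι → R[X]} :
    v ∈ completions A i (d - 1) ↔ v ∈ completions A i d ∧ ∀ r, (v r).coeff d = 0 := by
  refine ⟨fun ⟨hdeg, hdet⟩ ↦ ⟨⟨fun r ↦ (hdeg r).trans (Nat.sub_le d 1), hdet⟩, fun r ↦ ?_⟩,
    fun ⟨⟨hdeg, hdet⟩, hcoeff⟩ ↦ ⟨fun r ↦ natDegree_le_pred (hdeg r) (hcoeff r), hdet⟩⟩
  exact coeff_eq_zero_of_natDegree_lt ((hdeg r).trans_lt (Nat.sub_one_lt hd.ne'))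

lemma add_shiftedComb_mem_completions (hA : ∀ r j, (A r j).natDegree ≤ k j) (hk : ∀ j, k j ≤ d)
    {c : ι → R} (hc : c i = 0) {v : ι → R[X]} (hv : v ∈ completions A i d) :
    v + shiftedComb k A d c ∈ completions A i d := by
  refine ⟨fun r ↦ natDegree_add_le_of_degree_le (hv.1 r)
    (natDegree_shiftedComb_le hA (fun j _ ↦ hk j) r), ?_⟩
  rw [shiftedComb, det_updateCol_add_mulVec A v (by rw [hc, monomial_zero_right])]
  exact hv.2

lemma det_leadingMatrix_updateCol_eq_zero [IsDomain R] (hA : ∀ r j, (A r j).natDegree ≤ k j)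
    (hd : 0 < d) {v : ι → R[X]} (hv : v ∈ completions A i d) :
    ((leadingMatrix k A).updateCol i fun r ↦ (v r).coeff d).det = 0 := by
  rw [← leadingMatrix_updateCol]
  refine det_leadingMatrix_eq_zero_of_isUnit_det (fun r j ↦ ?_) hv.2 (i := i)
    (by rwa [Function.update_self])
  obtain rfl | hj := eq_or_ne j i
  · simpa using hv.1 r
  · simpa [hj] using hA r j

lemma injOn_add_shiftedComb (hk : ∀ j, k j ≤ d) (hd : 0 < d)
    (hL : ∀ c, c i = 0 → leadingMatrix k A *ᵥ c = 0 → c = 0) :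
    Set.InjOn (fun p : (ι → R[X]) × (ι → R) ↦ p.1 + shiftedComb k A d p.2)
      (completions A i (d - 1) ×ˢ {c | c i = 0}) := by
  have hcoeff {v : ι → R[X]} (hv : v ∈ completions A i (d - 1)) (c : ι → R) :
      (fun r ↦ ((v + shiftedComb k A d c) r).coeff d) = leadingMatrix k A *ᵥ c := by
    ext r
    rw [Pi.add_apply, coeff_add, ((mem_completions_pred_iff hd).1 hv).2 r, zero_add,
      coeff_shiftedComb (fun j _ ↦ hk j)]
  rintro ⟨v, c⟩ ⟨hv, hc : c i = 0⟩ ⟨w, e⟩ ⟨hw, he : e i = 0⟩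
    (h : v + shiftedComb k A d c = w + shiftedComb k A d e)
  have hce : c = e := by
    refine sub_eq_zero.1 (hL _ (by rw [Pi.sub_apply, hc, he, sub_zero]) ?_)
    rw [mulVec_sub, ← hcoeff hv, ← hcoeff hw, h, sub_self]
  subst hce
  rw [add_right_cancel h]

lemma completions_updateCol_shiftedComb {c : ι → R} (hci : c i = 0) {j : ι} (hji : j ≠ i)
    (hcj : IsUnit (c j)) :
    completions (A.updateCol j (shiftedComb k A (k j) c)) i d = completions A i d := by
  ext v
  refine and_congr_right fun _ ↦ ?_
  rw [shiftedComb, det_updateCol_mulVec_updateCol A hji.symm v (by rw [hci, monomial_zero_right]),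
    Nat.sub_self, IsUnit.mul_iff]
  exact and_iff_right (isUnit_C.2 hcj)

lemma completions_eq_empty_of_col_eq_zero [Nontrivial R] {j : ι} (hj : j ≠ i)
    (hA : ∀ r, A r j = 0) : completions A i d = ∅ := by
  refine Set.eq_empty_of_forall_notMem fun v hv ↦ hv.2.ne_zero ?_
  exact det_eq_zero_of_column_eq_zero j fun r ↦ by rw [updateCol_ne hj, hA]

end CommRing

variable {A : Matrix ι ι F[X]}

lemma completions_eq_image (hA : ∀ r j, (A r j).natDegree ≤ k j) (hk : ∀ j, k j ≤ d) (hd : 0 < d)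
    (hL : ∀ c, c i = 0 → leadingMatrix k A *ᵥ c = 0 → c = 0) :
    completions A i d = (fun p : (ι → F[X]) × (ι → F) ↦ p.1 + shiftedComb k A d p.2) ''
      (completions A i (d - 1) ×ˢ {c | c i = 0}) := by
  ext v
  constructor
  · intro hv
    obtain ⟨c, hci, hc⟩ :=
      exists_mulVec_eq_of_det_updateCol_eq_zero hL (det_leadingMatrix_updateCol_eq_zero hA hd hv)
    have hci' : (-c) i = 0 := by rw [Pi.neg_apply, hci, neg_zero]
    have hcoeff (r : ι) : (shiftedComb k A d (-c) r).coeff d = -(v r).coeff d := by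
      rw [coeff_shiftedComb (fun j _ ↦ hk j), mulVec_neg, hc, Pi.neg_apply]
    refine ⟨(v + shiftedComb k A d (-c), c), ⟨(mem_completions_pred_iff hd).2
      ⟨add_shiftedComb_mem_completions hA hk hci' hv, fun r ↦ ?_⟩, hci⟩, ?_⟩
    · dsimp only
      rw [Pi.add_apply, coeff_add, hcoeff, add_neg_cancel]
    · ext1 r
      simp [shiftedComb, mulVec, dotProduct]
  · rintro ⟨⟨v, c⟩, ⟨hv, hc⟩, rfl⟩
    exact add_shiftedComb_mem_completions hA hk hc ((mem_completions_pred_iff hd).1 hv).1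

lemma ncard_completions_of_leadingMatrix_injective (hA : ∀ r j, (A r j).natDegree ≤ k j)
    (hk : ∀ j, k j ≤ d) (hd : 0 < d)
    (hL : ∀ c, c i = 0 → leadingMatrix k A *ᵥ c = 0 → c = 0) :
    (completions A i d).ncard =
      Nat.card F ^ (Fintype.card ι - 1) * (completions A i (d - 1)).ncard := by
  rw [completions_eq_image hA hk hd hL, (injOn_add_shiftedComb hk hd hL).ncard_image,
    Set.ncard_prod, ncard_setOf_apply_eq_zero, mul_comm]

/-- Column reduction: among the columns occurring in a linear relation between leading
coefficients, one of largest degree bound is replaced by the shifted relation, in which the terms of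
that degree cancel. -/
lemma exists_completions_updateCol_eq (hA : ∀ r j, (A r j).natDegree ≤ k j) {c : ι → F}
    (hci : c i = 0) (hc : c ≠ 0) (hLc : leadingMatrix k A *ᵥ c = 0) :
    ∃ (j : ι) (w : ι → F[X]), j ≠ i ∧ (∀ r, (w r).natDegree ≤ k j ∧ (w r).coeff (k j) = 0) ∧
      ∀ d, completions (A.updateCol j w) i d = completions A i d := by
  classical
  obtain ⟨l, hl⟩ := Function.ne_iff.1 hc
  obtain ⟨j, hj, hjmax⟩ := ({j | c j ≠ 0} : Finset ι).exists_max_image k ⟨l, by simpa using hl⟩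
  have hcj : c j ≠ 0 := by simpa using hj
  have hmax (l : ι) (hl : c l ≠ 0) : k l ≤ k j := hjmax l (by simpa using hl)
  have hji : j ≠ i := by
    rintro rfl
    exact hcj hci
  refine ⟨j, shiftedComb k A (k j) c, hji, fun r ↦ ⟨natDegree_shiftedComb_le hA hmax r, ?_⟩,
    fun d ↦ completions_updateCol_shiftedComb hci hji hcj.isUnit⟩
  rw [coeff_shiftedComb hmax, hLc, Pi.zero_apply]

theorem ncard_completions (hA : ∀ r j, (A r j).natDegree ≤ k j) (hk : ∀ j, k j ≤ d)
    (hd : 0 < d) :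
    (completions A i d).ncard =
      Nat.card F ^ (Fintype.card ι - 1) * (completions A i (d - 1)).ncard := by
  induction hN : ∑ j, k j using Nat.strong_induction_on generalizing k A with
  | _ N ih =>
  by_cases hL : ∀ c, c i = 0 → leadingMatrix k A *ᵥ c = 0 → c = 0
  · exact ncard_completions_of_leadingMatrix_injective hA hk hd hL
  push Not at hL
  obtain ⟨c, hci, hLc, hc⟩ := hL
  obtain ⟨j, w, hji, hw, hcompl⟩ := exists_completions_updateCol_eq hA hci hc hLc
  have hw' (r : ι) : (w r).natDegree ≤ k j - 1 := natDegree_le_pred (hw r).1 (hw r).2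
  rw [← hcompl, ← hcompl]
  obtain hkj | hkj := Nat.eq_zero_or_pos (k j)
  · have hw0 (r : ι) : w r = 0 := by
      rw [eq_C_of_natDegree_le_zero ((hw r).1.trans_eq hkj), ← hkj, (hw r).2, C_0]
    have hempty (e : ℕ) : completions (A.updateCol j w) i e = ∅ :=
      completions_eq_empty_of_col_eq_zero hji fun r ↦ by rw [updateCol_self, hw0]
    rw [hempty, hempty, Set.ncard_empty, mul_zero]
  · have hlt : Function.update k j (k j - 1) < k := update_lt_self_iff.2 (Nat.sub_one_lt hkj.ne')
    refine ih _ (hN ▸ Fintype.sum_strictMono hlt) (fun r l ↦ ?_) (fun l ↦ (hlt.le l).trans (hk l))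
      rfl
    obtain rfl | hl := eq_or_ne l j
    · simpa using hw' r
    · simpa [hl] using hA r l

end Completions

section ColumnDegrees

variable {ι R F : Type*} [Fintype ι] [DecidableEq ι] [CommRing R] [Field F]

/-- The invertible polynomial matrices whose `j`-th column has degree at most `k j`. -/
def colDegreeLE (R : Type*) [CommRing R] (k : ι → ℕ) : Set (GL ι R[X]) :=
  {A | ∀ r j, (A r j).natDegree ≤ k j}

lemma finite_setOf_natDegree_le (R : Type*) [Semiring R] [Finite R] (d : ℕ) :
    {p : R[X] | p.natDegree ≤ d}.Finite := by
  have : Finite (degreeLT R (d + 1)) := .of_equiv _ (degreeLTEquiv R (d + 1)).toEquiv.symm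
  refine (Set.toFinite (degreeLT R (d + 1) : Set R[X])).subset fun p (hp : p.natDegree ≤ d) ↦ ?_
  exact mem_degreeLT.2 ((natDegree_le_iff_degree_le.1 hp).trans_lt (mod_cast d.lt_succ_self))

lemma finite_colDegreeLE [Finite R] (k : ι → ℕ) : (colDegreeLE R k).Finite := by
  refine Set.Finite.of_finite_image (f := Units.val) ?_ Units.val_injective.injOn
  refine (Set.Finite.pi fun _ ↦ Set.Finite.pi fun j ↦
    finite_setOf_natDegree_le R (k j)).subset (s := Set.univ.pi fun _ : ι ↦ Set.univ.pi _) ?_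
  rintro _ ⟨A, hA, rfl⟩ r - j -
  exact hA r j

lemma colDegreeLE_mono {k l : ι → ℕ} (hkl : k ≤ l) : colDegreeLE R k ⊆ colDegreeLE R l :=
  fun _ hA r j ↦ (hA r j).trans (hkl j)

lemma ncard_completions_eq_ncard_fiber {A : Matrix ι ι R[X]} {i : ι} {k : ι → ℕ}
    (hA : ∀ r, ∀ j ≠ i, (A r j).natDegree ≤ k j) :
    {B ∈ colDegreeLE R k | B.val.updateCol i 0 = A.updateCol i 0}.ncard =
      (completions A i (k i)).ncard := by
  have hB {B : GL ι R[X]} (h : B.val.updateCol i 0 = A.updateCol i 0) :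
      A.updateCol i (B.val.col i) = B := by
    rw [← updateCol_idem A i 0, ← h, updateCol_idem]
    exact updateCol_eq_self _ i
  refine Set.ncard_congr (fun B _ ↦ B.val.col i) (fun B ⟨hdeg, h⟩ ↦ ⟨fun r ↦ hdeg r i, ?_⟩)
    (fun B B' ⟨_, h⟩ ⟨_, h'⟩ hcol ↦ ?_) fun v hv ↦ ?_
  · rw [hB h]
    exact (isUnit_iff_isUnit_det _).1 B.isUnit
  · exact Units.ext (by rw [← hB h, ← hB h', hcol])
  · refine ⟨GeneralLinearGroup.mk'' _ hv.2, ⟨fun r j ↦ ?_, updateCol_idem A i v 0⟩, ?_⟩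
    · obtain rfl | hj := eq_or_ne j i
      · simpa using hv.1 r
      · simpa [hj] using hA r j hj
    · ext1 r
      exact updateCol_self

lemma map_C_mul_mem_colDegreeLE {k : ι → ℕ} (U : GL ι R) {A : GL ι R[X]}
    (hA : A ∈ colDegreeLE R k) : GeneralLinearGroup.map C U * A ∈ colDegreeLE R k := fun _ j ↦
  natDegree_sum_le_of_forall_le _ _ fun l _ ↦ (natDegree_C_mul_le _ _).trans (hA l j)

theorem ncard_colDegreeLE [Finite F] {k : ι → ℕ} {i : ι} (hmax : ∀ j, k j ≤ k i)
    (hpos : 0 < k i) :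
    (colDegreeLE F k).ncard = Nat.card F ^ (Fintype.card ι - 1) *
      (colDegreeLE F (Function.update k i (k i - 1))).ncard := by
  have hle : Function.update k i (k i - 1) ≤ k := update_le_self_iff.2 (Nat.sub_le _ _)
  refine ncard_eq_mul_ncard_of_fiberwise (finite_colDegreeLE k) (colDegreeLE_mono hle)
    (fun B ↦ B.val.updateCol i 0) _ fun A hA ↦ ?_
  rw [ncard_completions_eq_ncard_fiber fun _ j _ ↦ hA _ j,
    ncard_completions_eq_ncard_fiber fun r j hj ↦ by
      rw [Function.update_of_ne hj]; exact hA r j,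
    Function.update_self, ncard_completions hA hmax hpos]

end ColumnDegrees

lemma Pset_eq (F : Type*) [Field F] (n : ℕ) (k : Fin n → ℕ) :
    Pset F n k = {A ∈ colDegreeLE F k | GeneralLinearGroup.map constantCoeff A = 1} := by
  ext A
  refine and_congr (forall₂_congr fun _ _ ↦ natDegree_le_iff_degree_le.symm) ?_
  rw [Units.ext_iff]
  rfl

lemma ncard_colDegreeLE_eq_natCard_mul_ncard_Pset (F : Type*) [Field F] (n : ℕ) (k : Fin n → ℕ) :
    (colDegreeLE F k).ncard = Nat.card (GL (Fin n) F) * (Pset F n k).ncard := by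
  have hsec : Function.LeftInverse (GeneralLinearGroup.map (n := Fin n) constantCoeff)
      (GeneralLinearGroup.map (C : F →+* F[X])) := fun U ↦ by
    ext
    simp
  rw [Pset_eq, ncard_eq_natCard_mul_ncard_of_leftInverse hsec
    fun U _ hA ↦ map_C_mul_mem_colDegreeLE U hA]

theorem stmt_7_general (F : Type*) [Field F] [Finite F] (n : ℕ) (k : Fin n → ℕ) (i : Fin n)
    (hmax : ∀ j, k j ≤ k i) (hpos : 0 < k i) :
    (Pset F n k).ncard =
      Nat.card F ^ (n - 1) * (Pset F n (Function.update k i (k i - 1))).ncard := by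
  have h := ncard_colDegreeLE (F := F) hmax hpos
  rw [ncard_colDegreeLE_eq_natCard_mul_ncard_Pset, ncard_colDegreeLE_eq_natCard_mul_ncard_Pset,
    mul_left_comm, Fintype.card_fin] at h
  exact Nat.eq_of_mul_eq_mul_left Nat.card_pos h

/-- For `k₁ ≥ k₂ ≥ ⋯ ≥ kₙ ≥ 1`,
`#P_{n;k₁,…,kₙ} = q^{n-1} · #P_{n;k₁-1,k₂,…,kₙ}`. -/
theorem stmt_7 (F : Type*) [Field F] [Fintype F] (q : ℕ) (hq : Fintype.card F = q)
    (n : ℕ) (hn : 0 < n) (k : Fin n → ℕ)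
    (hdesc : ∀ i j : Fin n, i ≤ j → k j ≤ k i)
    (hpos : ∀ j : Fin n, 1 ≤ k j) :
    (Pset F n k).ncard
      = q ^ (n - 1) * (Pset F n (Function.update k ⟨0, hn⟩ (k ⟨0, hn⟩ - 1))).ncard := by
  rw [← hq, ← Nat.card_eq_fintype_card]
  exact stmt_7_general F n k _ (fun j ↦ hdesc _ j (Nat.zero_le j.val)) (hpos _)
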